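/- Let (X, W) be a left Frobenius pair in a triangulated category T. Then (X, Ŵ) is a co-t-structure on the thick triangulated subcategory Thick(X) = X̂ of T: X and Ŵ are closed under direct summands, X[-1] ⊆ X, Hom(X, Y[1]) = 0 for all X ∈ X and Y ∈ Ŵ, and every C ∈ X̂ admits distinguished triangles Y → X' → C → Y[1] and C → Y' → X'' → C[1] with X', X'' ∈ X and Y, Y' ∈ Ŵ. -/

import Mathlib

/-!
Since `X` is closed under extensions and cocones and contains `0`, it is stable under `[-1]`, and
an induction shows `X̂ₙ = X[n]`. Hence `X̂ = ⋃ₙ X[n]` is thick, and it is clearly contained in every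
thick subcategory containing `X`; moreover `Hom(X, Y[1]) = 0` already forces `Y ∈ X^⊥`.

Octahedra are not available (`T` is only assumed pretriangulated), so membership in `X` and `Ŵ`
is detected by orthogonality:

* an object `R` of `X̂` with `Hom(R, U[1]) = 0` for all `U ∈ X^⊥` lies in `X`
  (`mem_of_leftOrth`): shifting cogenerator triangles shows that `R ∈ X[n+1]` is a direct summand
  of an object of `X[n]`, and one descends;
* `Ŵ = X̂ ∩ X^⊥` (`triHat_of_rightOrth`, `TriHat.rightOrth`), from which closure of `Ŵ` under
  direct summands follows.

The triangles `C → Y' → X'' → C[1]` are built by induction on `n` for `C ∈ X[n]`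
(`exists_approx`). Given such a triangle for `C[-1]`, rotate it to `Y → X'' → C`, embed
`X'' → W₀` by the cogenerator property, and let `Y'` be the cone of `Y → X'' → W₀`. A fill-in
`C → Y'` has a cone which is left orthogonal to `X^⊥[1]` by a diagram chase (`leftOrth_cone`),
hence lies in `X`. The other approximation triangle of `C` is a rotation of this one for `C[-1]`.
-/

open CategoryTheory CategoryTheory.Limits CategoryTheory.Pretriangulated ZeroObject

universe v u

namespace FrobeniusPaperTri

variable {T : Type u} [Category.{v} T] [HasZeroObject T] [HasShift T ℤ] [Preadditive T]
  [∀ n : ℤ, (shiftFunctor T n).Additive] [Pretriangulated T]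

/-- A "subcategory" of the triangulated category `T`: a full additive subcategory, regarded
as the membership predicate on objects, closed under isomorphisms and direct summands. -/
structure IsTriSubcat (X : T → Prop) : Prop where
  zero : X 0
  iso_closed : ∀ {A B : T}, (A ≅ B) → X A → X B
  summand_closed : ∀ {A M : T} (i : A ⟶ M) (p : M ⟶ A), i ≫ p = 𝟙 A → X M → X A

/-- `TriHat X n M` : `M ∈ X̂ₙ`, i.e. there are distinguished triangles
`K_{i+1} → X_i → K_i → K_{i+1}[1]` for `0 ≤ i ≤ n-1` with `K₀ = M`, all `X_i ∈ X` and
`K_n ∈ X`. -/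
def TriHat (X : T → Prop) : ℕ → T → Prop
  | 0, M => X M
  | (n + 1), M => ∃ (K E : T) (f : K ⟶ E) (g : E ⟶ M) (h : M ⟶ K⟦(1 : ℤ)⟧),
      (Triangle.mk f g h ∈ distTriang T) ∧ X E ∧ TriHat X n K

/-- `M ∈ X̂ = ⋃ₙ X̂ₙ`. -/
def TriHatAll (X : T → Prop) (M : T) : Prop := ∃ n, TriHat X n M

/-- A left Frobenius pair `(X, W)` in the triangulated category `T`. -/
structure TriLeftFrobenius (X W : T → Prop) : Prop where
  subX : IsTriSubcat X
  subW : IsTriSubcat W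
  /-- `X` is closed under extensions. -/
  extClosed : ∀ ⦃A B M : T⦄ (f : A ⟶ B) (g : B ⟶ M) (h : M ⟶ A⟦(1 : ℤ)⟧),
    (Triangle.mk f g h ∈ distTriang T) →
    X A → X M → X B
  /-- `X` is closed under cocones of deflations. -/
  coconeClosed : ∀ ⦃A B M : T⦄ (f : A ⟶ B) (g : B ⟶ M) (h : M ⟶ A⟦(1 : ℤ)⟧),
    (Triangle.mk f g h ∈ distTriang T) →
    X B → X M → X A
  /-- `W ⊆ X`. -/
  WsubX : ∀ M, W M → X M
  /-- `W` is a cogenerator for `X`: every `M ∈ X` fits in a distinguished triangle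
  `M → W₀ → X' → M[1]` with `W₀ ∈ W`, `X' ∈ X`. -/
  cogen : ∀ M, X M → ∃ (W₀ X' : T) (f : M ⟶ W₀) (g : W₀ ⟶ X') (h : X' ⟶ M⟦(1 : ℤ)⟧),
    (Triangle.mk f g h ∈ distTriang T) ∧ W W₀ ∧ X X'
  /-- `W ⊆ X^⊥`: `Hom(M, N[i]) = 0` for `i ≥ 1`, `M ∈ X`, `N ∈ W`. -/
  perp : ∀ M N, X M → W N → ∀ i : ℤ, 1 ≤ i → ∀ f : M ⟶ N⟦i⟧, f = 0

/-- A thick (strictly full) triangulated subcategory of `T`, closed under direct summands. -/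
structure IsThickTriSub (S : T → Prop) : Prop where
  zero : S 0
  iso_closed : ∀ {A B : T}, (A ≅ B) → S A → S B
  shift_closed : ∀ (M : T) (n : ℤ), S M → S (M⟦n⟧)
  ext_closed : ∀ ⦃A B M : T⦄ (f : A ⟶ B) (g : B ⟶ M) (h : M ⟶ A⟦(1 : ℤ)⟧),
    (Triangle.mk f g h ∈ distTriang T) →
    S A → S B → S M
  summand_closed : ∀ {A M : T} (i : A ⟶ M) (p : M ⟶ A), i ≫ p = 𝟙 A → S M → S A

/-- Membership in `Thick(X)`, the smallest thick triangulated subcategory containing `X`. -/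
def triThickClosure (X : T → Prop) (M : T) : Prop :=
  ∀ S : T → Prop, IsThickTriSub S → (∀ N, X N → S N) → S M

/-! ### Triangles up to the choice of morphisms -/

/-- There is a distinguished triangle `A → B → C → A[1]`. -/
def Tri (A B C : T) : Prop :=
  ∃ (f : A ⟶ B) (g : B ⟶ C) (h : C ⟶ A⟦(1 : ℤ)⟧), Triangle.mk f g h ∈ distTriang T

lemma Tri.of_mem {t : Triangle T} (ht : t ∈ distTriang T) : Tri t.obj₁ t.obj₂ t.obj₃ :=
  ⟨t.mor₁, t.mor₂, t.mor₃, ht⟩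

lemma Tri.rotate {A B C : T} (h : Tri A B C) : Tri B C (A⟦(1 : ℤ)⟧) := by
  obtain ⟨f, g, k, ht⟩ := h
  exact Tri.of_mem (rot_of_distTriang _ ht)

lemma Tri.invRotate {A B C : T} (h : Tri A B C) : Tri (C⟦(-1 : ℤ)⟧) A B := by
  obtain ⟨f, g, k, ht⟩ := h
  exact Tri.of_mem (inv_rot_of_distTriang _ ht)

lemma Tri.shift {A B C : T} (h : Tri A B C) (n : ℤ) : Tri (A⟦n⟧) (B⟦n⟧) (C⟦n⟧) := by
  obtain ⟨f, g, k, ht⟩ := h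
  exact Tri.of_mem (Triangle.shift_distinguished _ ht n)

lemma Tri.iso₁ {A A' B C : T} (h : Tri A B C) (e : A ≅ A') : Tri A' B C := by
  obtain ⟨f, g, k, ht⟩ := h
  refine ⟨e.inv ≫ f, g, k ≫ e.hom⟦(1 : ℤ)⟧', isomorphic_distinguished _ ht _ ?_⟩
  refine Triangle.isoMk _ _ e.symm (Iso.refl B) (Iso.refl C) ?_ ?_ ?_
  · change (e.inv ≫ f) ≫ 𝟙 B = e.inv ≫ f
    simp
  · change g ≫ 𝟙 C = 𝟙 B ≫ g
    simp
  · change (k ≫ e.hom⟦(1 : ℤ)⟧') ≫ e.inv⟦(1 : ℤ)⟧' = 𝟙 C ≫ k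
    rw [Category.assoc, ← CategoryTheory.Functor.map_comp, e.hom_inv_id,
      CategoryTheory.Functor.map_id, Category.comp_id, Category.id_comp]

lemma Tri.iso₃ {A B C C' : T} (h : Tri A B C) (e : C ≅ C') : Tri A B C' := by
  obtain ⟨f, g, k, ht⟩ := h
  refine ⟨f, g ≫ e.hom, e.inv ≫ k, isomorphic_distinguished _ ht _ ?_⟩
  refine Triangle.isoMk _ _ (Iso.refl A) (Iso.refl B) e.symm ?_ ?_ ?_
  · change f ≫ 𝟙 B = 𝟙 A ≫ f
    simp
  · change (g ≫ e.hom) ≫ e.inv = 𝟙 B ≫ g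
    simp
  · change (e.inv ≫ k) ≫ (𝟙 A)⟦(1 : ℤ)⟧' = e.inv ≫ k
    rw [CategoryTheory.Functor.map_id, Category.comp_id]

lemma tri_shift_neg_zero (M : T) : Tri (M⟦(-1 : ℤ)⟧) 0 M :=
  (Tri.of_mem (contractible_distinguished₂ (M⟦(-1 : ℤ)⟧))).iso₃ (shiftNegShift M (1 : ℤ))

/-! Exactness of `Hom(-, U)` and `Hom(N, -)` on a triangle given by its three morphisms. -/

section

variable {A B C : T} {f : A ⟶ B} {g : B ⟶ C} {h : C ⟶ A⟦(1 : ℤ)⟧}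
  (ht : Triangle.mk f g h ∈ distTriang T)
include ht

lemma yon₂ {U : T} (x : B ⟶ U) (hx : f ≫ x = 0) : ∃ y : C ⟶ U, x = g ≫ y :=
  Triangle.yoneda_exact₂ _ ht x hx

lemma yon₃ {U : T} (x : C ⟶ U) (hx : g ≫ x = 0) : ∃ y : A⟦(1 : ℤ)⟧ ⟶ U, x = h ≫ y :=
  Triangle.yoneda_exact₃ _ ht x hx

lemma yon₁ {U : T} (x : A⟦(1 : ℤ)⟧ ⟶ U) (hx : h ≫ x = 0) :
    ∃ y : B⟦(1 : ℤ)⟧ ⟶ U, x = f⟦(1 : ℤ)⟧' ≫ y := by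
  obtain ⟨y, hy⟩ : ∃ y : B⟦(1 : ℤ)⟧ ⟶ U, x = (-f⟦(1 : ℤ)⟧') ≫ y :=
    yon₃ (rot_of_distTriang _ ht) x hx
  exact ⟨-y, by rw [hy, Preadditive.neg_comp, Preadditive.comp_neg]⟩

lemma coyon₂ {N : T} (x : N ⟶ B) (hx : x ≫ g = 0) : ∃ y : N ⟶ A, x = y ≫ f :=
  Triangle.coyoneda_exact₂ _ ht x hx

lemma coyon₃ {N : T} (x : N ⟶ C) (hx : x ≫ h = 0) : ∃ y : N ⟶ B, x = y ≫ g :=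
  Triangle.coyoneda_exact₃ _ ht x hx

end

/-! ### The shifts `X[n]` and orthogonality -/

/-- `ShiftOf X n M` says `M ∈ X[n]`, i.e. `M[-1]⋯[-1] ∈ X` with `n` shifts. Shifting one step at a
time avoids comparing iterated shifts. -/
def ShiftOf (X : T → Prop) : ℕ → T → Prop
  | 0, M => X M
  | n + 1, M => ShiftOf X n (M⟦(-1 : ℤ)⟧)

/-- `Hom(N, U[1]) = 0` for all `N ∈ X`. As `X[-1] ⊆ X` for a left Frobenius pair, this amounts to
`U ∈ X^⊥`. -/
def RightOrth (X : T → Prop) (U : T) : Prop :=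
  ∀ N, X N → ∀ f : N ⟶ U⟦(1 : ℤ)⟧, f = 0

/-- `Hom(R, U[1]) = 0` for all `U` right orthogonal to `X` in the sense of `RightOrth`. -/
def LeftOrth (X : T → Prop) (R : T) : Prop :=
  ∀ U, RightOrth X U → ∀ f : R ⟶ U⟦(1 : ℤ)⟧, f = 0

omit [HasZeroObject T] [∀ n : ℤ, (shiftFunctor T n).Additive] [Pretriangulated T] in
lemma RightOrth.summand {X : T → Prop} {A M : T} (i : A ⟶ M) (p : M ⟶ A) (hip : i ≫ p = 𝟙 A)
    (hM : RightOrth X M) : RightOrth X A := by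
  intro N hN f
  have h0 := hM N hN (f ≫ i⟦(1 : ℤ)⟧')
  have h1 : f = (f ≫ i⟦(1 : ℤ)⟧') ≫ p⟦(1 : ℤ)⟧' := by
    rw [Category.assoc, ← Functor.map_comp, hip, CategoryTheory.Functor.map_id, Category.comp_id]
  rw [h1, h0, zero_comp]

lemma RightOrth.ext {X : T → Prop} {A B C : T} (t : Tri A B C) (hA : RightOrth X A)
    (hC : RightOrth X C) : RightOrth X B := by
  intro N hN f
  obtain ⟨a, b, c, ht⟩ := t.shift 1
  obtain ⟨g, rfl⟩ := coyon₂ ht f (hC N hN _)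
  have hg : g = 0 := hA N hN g
  rw [hg, zero_comp]

section

variable {X W : T → Prop} (hF : TriLeftFrobenius X W)
include hF

lemma shift_neg_mem {M : T} (hM : X M) : X (M⟦(-1 : ℤ)⟧) := by
  obtain ⟨f, g, h, ht⟩ := tri_shift_neg_zero M
  exact hF.coconeClosed f g h ht hF.subX.zero hM

lemma ShiftOf.summand : ∀ (n : ℕ) {A M : T} (i : A ⟶ M) (p : M ⟶ A), i ≫ p = 𝟙 A →
    ShiftOf X n M → ShiftOf X n A
  | 0, _, _, i, p, hip, hM => hF.subX.summand_closed i p hip hM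
  | n + 1, _, _, i, p, hip, hM => by
    refine ShiftOf.summand n (i⟦(-1 : ℤ)⟧') (p⟦(-1 : ℤ)⟧') ?_ hM
    rw [← Functor.map_comp, hip, CategoryTheory.Functor.map_id]

lemma ShiftOf.iso {n : ℕ} {A B : T} (e : A ≅ B) (h : ShiftOf X n A) : ShiftOf X n B :=
  ShiftOf.summand hF n e.inv e.hom e.inv_hom_id h

lemma ShiftOf.ext : ∀ (n : ℕ) {A B C : T}, Tri A B C → ShiftOf X n A → ShiftOf X n C →
    ShiftOf X n B
  | 0, _, _, _, ⟨f, g, h, ht⟩, hA, hC => hF.extClosed f g h ht hA hC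
  | n + 1, _, _, _, t, hA, hC => ShiftOf.ext n (t.shift (-1)) hA hC

lemma ShiftOf.succ : ∀ (n : ℕ) {A : T}, ShiftOf X n A → ShiftOf X (n + 1) A
  | 0, _, h => shift_neg_mem hF h
  | n + 1, _, h => ShiftOf.succ n h

lemma ShiftOf.of_zero {A : T} (h : X A) : ∀ n : ℕ, ShiftOf X n A
  | 0 => h
  | n + 1 => ShiftOf.succ hF n (ShiftOf.of_zero h n)

lemma ShiftOf.le {n m : ℕ} (hnm : n ≤ m) {A : T} (h : ShiftOf X n A) : ShiftOf X m A := by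
  induction hnm with
  | refl => exact h
  | step _ ih => exact ShiftOf.succ hF _ ih

lemma ShiftOf.shift {n : ℕ} {A : T} (h : ShiftOf X n A) : ShiftOf X (n + 1) (A⟦(1 : ℤ)⟧) :=
  ShiftOf.iso (n := n) hF (shiftShiftNeg A (1 : ℤ)).symm h

lemma ShiftOf.cone {n : ℕ} {A B C : T} (t : Tri A B C) (hA : ShiftOf X n A)
    (hB : ShiftOf X (n + 1) B) : ShiftOf X (n + 1) C :=
  ShiftOf.ext hF _ t.rotate hB (ShiftOf.shift hF hA)

lemma triHat_iff_shiftOf : ∀ (n : ℕ) (M : T), TriHat X n M ↔ ShiftOf X n M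
  | 0, _ => Iff.rfl
  | n + 1, M => by
    constructor
    · rintro ⟨K, E, f, g, h, ht, hE, hK⟩
      exact ShiftOf.cone hF ⟨f, g, h, ht⟩ ((triHat_iff_shiftOf n K).1 hK)
        (ShiftOf.of_zero hF hE _)
    · intro hM
      obtain ⟨f, g, h, ht⟩ := tri_shift_neg_zero M
      exact ⟨_, _, f, g, h, ht, hF.subX.zero, (triHat_iff_shiftOf n _).2 hM⟩

lemma rightOrth_of_mem {V : T} (hV : W V) : RightOrth X V :=
  fun N hN f => hF.perp N V hN hV 1 le_rfl f

lemma RightOrth.shift {U : T} (hU : RightOrth X U) : RightOrth X (U⟦(1 : ℤ)⟧) := by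
  intro N hN f
  have h := hU _ (shift_neg_mem hF hN) (f⟦(-1 : ℤ)⟧' ≫ (shiftShiftNeg (U⟦(1 : ℤ)⟧) (1 : ℤ)).hom)
  rw [Preadditive.IsIso.comp_right_eq_zero] at h
  exact (shiftFunctor T (-1 : ℤ)).map_injective (by rw [h, Functor.map_zero])

lemma mem_of_rightOrth {M : T} (hM : X M) (hM' : RightOrth X M) : W M := by
  obtain ⟨W₀, X', f, g, h, ht, hW, hX⟩ := hF.cogen M hM
  -- `M → W₀` is split mono since the connecting morphism vanishes.
  obtain rfl : h = 0 := hM' X' hX h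
  obtain ⟨p, hp⟩ := yon₁ ht (𝟙 (M⟦(1 : ℤ)⟧)) zero_comp
  obtain ⟨p, rfl⟩ := (shiftFunctor T (1 : ℤ)).map_surjective p
  rw [← CategoryTheory.Functor.map_comp, ← CategoryTheory.Functor.map_id] at hp
  exact hF.subW.summand_closed f p ((shiftFunctor T (1 : ℤ)).map_injective hp.symm) hW

/-! ### Detecting `X` by orthogonality -/

/-- The cogenerator triangles of `X`, shifted `n` times. -/
lemma exists_shifted_cogen : ∀ (n : ℕ) (D : T), ShiftOf X n D →
    ∃ U X₁, Tri D U X₁ ∧ RightOrth X U ∧ ShiftOf X n X₁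
  | 0, D, hD => by
    obtain ⟨W₀, X', f, g, h, ht, hW, hX⟩ := hF.cogen D hD
    exact ⟨W₀, X', ⟨f, g, h, ht⟩, rightOrth_of_mem hF hW, hX⟩
  | n + 1, D, hD => by
    obtain ⟨U, X₁, t, hU, hX⟩ := exists_shifted_cogen n _ hD
    exact ⟨_, _, (t.shift 1).iso₁ (shiftNegShift D (1 : ℤ)), RightOrth.shift hF hU,
      ShiftOf.shift hF hX⟩

lemma mem_of_leftOrth : ∀ (n : ℕ) (R : T), ShiftOf X n R → LeftOrth X R → X R
  | 0, _, hR, _ => hR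
  | n + 1, R, hR, hL => by
    obtain ⟨U, X₁, t, hU, hX⟩ := exists_shifted_cogen hF n _ hR
    obtain ⟨f, g, h, ht⟩ := t.rotate.iso₃ (shiftNegShift R (1 : ℤ))
    obtain ⟨s, hs⟩ := coyon₃ ht (𝟙 R) (hL U hU _)
    exact mem_of_leftOrth n R (ShiftOf.summand hF n s g hs.symm hX) hL

/-! ### Approximation triangles -/

omit hF in
/-- Compare triangles `Y → X₂ → C` and `Y → W₀ → Y'` over `b : X₂ ⟶ W₀`, via a fill-in
`c : C ⟶ Y'`. If `b` has cone in `X` and `W₀ ∈ X`, the cone `Q` of `c` is left orthogonal. With the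
octahedral axiom `Q` could be taken to be the cone of `b`. -/
lemma leftOrth_cone {Y X₂ C W₀ X₃ Y' Q : T}
    {a : Y ⟶ X₂} {a' : X₂ ⟶ C} {a'' : C ⟶ Y⟦(1 : ℤ)⟧} (ha : Triangle.mk a a' a'' ∈ distTriang T)
    {b : X₂ ⟶ W₀} {b' : W₀ ⟶ X₃} {b'' : X₃ ⟶ X₂⟦(1 : ℤ)⟧}
    (hb : Triangle.mk b b' b'' ∈ distTriang T)
    {d' : W₀ ⟶ Y'} {d'' : Y' ⟶ Y⟦(1 : ℤ)⟧}
    (hd : Triangle.mk (a ≫ b) d' d'' ∈ distTriang T)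
    {c : C ⟶ Y'} {c' : Y' ⟶ Q} {c'' : Q ⟶ C⟦(1 : ℤ)⟧} (hc : Triangle.mk c c' c'' ∈ distTriang T)
    (h₁ : a' ≫ c = b ≫ d') (h₂ : c ≫ d'' = a'')
    (hW₀ : X W₀) (hX₃ : X X₃) : LeftOrth X Q := by
  intro U hU f
  have hdz : d'' ≫ (a ≫ b)⟦(1 : ℤ)⟧' = 0 := comp_distTriang_mor_zero₃₁ _ hd
  have hcc : c ≫ c' = 0 := comp_distTriang_mor_zero₁₂ _ hc
  have hcz : c'' ≫ c⟦(1 : ℤ)⟧' = 0 := comp_distTriang_mor_zero₃₁ _ hc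
  have haz : a ≫ a' = 0 := comp_distTriang_mor_zero₁₂ _ ha
  -- Morphisms `X₂[1] ⟶ U[1]` extend along `b[1]`, since `Hom(X₃, U[1]) = 0`.
  have ext_b : ∀ k : X₂⟦(1 : ℤ)⟧ ⟶ U⟦(1 : ℤ)⟧, ∃ l : W₀⟦(1 : ℤ)⟧ ⟶ U⟦(1 : ℤ)⟧,
      k = b⟦(1 : ℤ)⟧' ≫ l :=
    fun k => yon₁ hb k (hU X₃ hX₃ _)
  -- `Hom(Y', U[1]) ⟶ Hom(C, U[1])` is injective.
  have inj : ∀ φ : Y' ⟶ U⟦(1 : ℤ)⟧, c ≫ φ = 0 → φ = 0 := by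
    intro φ hφ
    obtain ⟨ψ, rfl⟩ := yon₃ hd φ (hU W₀ hW₀ _)
    rw [← Category.assoc, h₂] at hφ
    obtain ⟨k, rfl⟩ := yon₁ ha ψ hφ
    obtain ⟨l, rfl⟩ := ext_b k
    rw [← Category.assoc (a⟦(1 : ℤ)⟧'), ← CategoryTheory.Functor.map_comp, ← Category.assoc, hdz,
      zero_comp]
  -- `Hom(Y', U) ⟶ Hom(C, U)` is surjective.
  have surj : ∀ x : C ⟶ U, ∃ y : Y' ⟶ U, x = c ≫ y := by
    intro x
    obtain ⟨l, hl⟩ := ext_b ((a' ≫ x)⟦(1 : ℤ)⟧')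
    obtain ⟨w, rfl⟩ := (shiftFunctor T (1 : ℤ)).map_surjective l
    rw [← Functor.map_comp] at hl
    have hw : a' ≫ x = b ≫ w := (shiftFunctor T (1 : ℤ)).map_injective hl
    obtain ⟨y, hy⟩ := yon₂ hd w (by
      rw [Category.assoc, ← hw, ← Category.assoc, haz, zero_comp])
    obtain ⟨z, hz⟩ := yon₃ ha (x - c ≫ y) (by
      rw [Preadditive.comp_sub, hw, hy, ← Category.assoc, ← Category.assoc, h₁, sub_self])
    refine ⟨y + d'' ≫ z, ?_⟩
    rw [Preadditive.comp_add, ← Category.assoc c d'', h₂, ← hz]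
    abel
  have h0 : c' ≫ f = 0 := inj _ (by rw [← Category.assoc, hcc, zero_comp])
  obtain ⟨g, hg⟩ := yon₃ hc f h0
  obtain ⟨x, rfl⟩ := (shiftFunctor T (1 : ℤ)).map_surjective g
  obtain ⟨y, rfl⟩ := surj x
  rw [hg, Functor.map_comp, ← Category.assoc, hcz, zero_comp]

lemma exists_approx : ∀ (n : ℕ) (C : T), ShiftOf X n C →
    ∃ Y Q, Tri C Y Q ∧ RightOrth X Y ∧ X Q
  | 0, C, hC => by
    obtain ⟨W₀, X', f, g, h, ht, hW, hX⟩ := hF.cogen C hC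
    exact ⟨W₀, X', ⟨f, g, h, ht⟩, rightOrth_of_mem hF hW, hX⟩
  | n + 1, C, hC => by
    obtain ⟨Y, X₂, t, hY, hX₂⟩ := exists_approx n _ hC
    have hYn : ShiftOf X n Y := ShiftOf.ext hF n t hC (ShiftOf.of_zero hF hX₂ n)
    obtain ⟨a, a', a'', ha⟩ := t.rotate.iso₃ (shiftNegShift C (1 : ℤ))
    obtain ⟨W₀, X₃, b, b', b'', hb, hW₀, hX₃⟩ := hF.cogen X₂ hX₂
    obtain ⟨Y', d', d'', hd⟩ := distinguished_cocone_triangle (a ≫ b)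
    obtain ⟨c, h₁, h₂⟩ : ∃ c : C ⟶ Y', a' ≫ c = b ≫ d' ∧ a'' ≫ (𝟙 Y)⟦(1 : ℤ)⟧' = c ≫ d'' :=
      complete_distinguished_triangle_morphism _ _ ha hd (𝟙 Y) b (Category.id_comp (a ≫ b)).symm
    rw [CategoryTheory.Functor.map_id, Category.comp_id] at h₂
    obtain ⟨Q, c', c'', hc⟩ := distinguished_cocone_triangle c
    have hY'n : ShiftOf X (n + 1) Y' :=
      ShiftOf.cone hF ⟨_, _, _, hd⟩ hYn (ShiftOf.of_zero hF (hF.WsubX _ hW₀) _)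
    have hQ : LeftOrth X Q := leftOrth_cone ha hb hd hc h₁ h₂.symm
      (hF.WsubX _ hW₀) hX₃
    refine ⟨Y', Q, ⟨_, _, _, hc⟩, ?_, mem_of_leftOrth hF (n + 2) Q ?_ hQ⟩
    · exact RightOrth.ext (Tri.rotate ⟨_, _, _, hd⟩) (rightOrth_of_mem hF hW₀)
        (RightOrth.shift hF hY)
    · exact ShiftOf.cone hF ⟨_, _, _, hc⟩ hC (ShiftOf.succ hF _ hY'n)

/-! ### The class `Ŵ` -/

lemma triHat_of_rightOrth : ∀ (n : ℕ) (Y : T), ShiftOf X n Y → RightOrth X Y → TriHat W n Y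
  | 0, _, hY, hY' => mem_of_rightOrth hF hY hY'
  | n + 1, Y, hY, hY' => by
    obtain ⟨K, X₂, t, hK, hX₂⟩ := exists_approx hF n _ hY
    have hKn : ShiftOf X n K := ShiftOf.ext hF n t hY (ShiftOf.of_zero hF hX₂ n)
    have t' := t.rotate.iso₃ (shiftNegShift Y (1 : ℤ))
    obtain ⟨f, g, h, ht⟩ := t'
    exact ⟨K, X₂, f, g, h, ht, mem_of_rightOrth hF hX₂ (RightOrth.ext ⟨f, g, h, ht⟩ hK hY'),
      triHat_of_rightOrth n K hKn hK⟩

lemma TriHat.rightOrth : ∀ (n : ℕ) (Y : T), TriHat W n Y → ShiftOf X n Y ∧ RightOrth X Y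
  | 0, _, hY => ⟨hF.WsubX _ hY, rightOrth_of_mem hF hY⟩
  | n + 1, Y, ⟨K, E, f, g, h, ht, hE, hK⟩ => by
    obtain ⟨h₁, h₂⟩ := TriHat.rightOrth n K hK
    have t : Tri K E Y := ⟨f, g, h, ht⟩
    exact ⟨ShiftOf.cone hF t h₁ (ShiftOf.of_zero hF (hF.WsubX _ hE) _),
      RightOrth.ext t.rotate (rightOrth_of_mem hF hE) (RightOrth.shift hF h₂)⟩

/-- The approximation triangle with middle term in `Ŵ`. -/
lemma exists_approx_hat (n : ℕ) (C : T) (hC : ShiftOf X n C) :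
    ∃ Y Q, Tri C Y Q ∧ X Q ∧ TriHatAll W Y := by
  obtain ⟨Y, Q, t, hY, hQ⟩ := exists_approx hF n C hC
  exact ⟨Y, Q, t, hQ, n, triHat_of_rightOrth hF n Y
    (ShiftOf.ext hF n t hC (ShiftOf.of_zero hF hQ n)) hY⟩

/-! ### Thickness of `X̂` -/

lemma triHatAll_iff (M : T) : TriHatAll X M ↔ ∃ n, ShiftOf X n M :=
  exists_congr fun n => triHat_iff_shiftOf hF n M

lemma isThick_triHatAll : IsThickTriSub (TriHatAll X) where
  zero := ⟨0, hF.subX.zero⟩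
  iso_closed e hA := by
    rw [triHatAll_iff hF] at hA ⊢
    obtain ⟨n, hn⟩ := hA
    exact ⟨n, ShiftOf.iso hF e hn⟩
  shift_closed M k hM := by
    rw [triHatAll_iff hF] at hM ⊢
    induction k using Int.induction_on with
    | zero =>
      obtain ⟨n, hn⟩ := hM
      exact ⟨n, ShiftOf.iso hF ((shiftFunctorZero T ℤ).app M).symm hn⟩
    | succ i ih =>
      obtain ⟨n, hn⟩ := ih
      exact ⟨n + 1, ShiftOf.iso hF ((shiftFunctorAdd T (i : ℤ) 1).app M).symm
        (ShiftOf.shift hF hn)⟩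
    | pred i ih =>
      obtain ⟨n, hn⟩ := ih
      exact ⟨n, ShiftOf.iso hF ((shiftFunctorAdd' T (-i : ℤ) (-1) (-i - 1) rfl).app M).symm
        (ShiftOf.succ hF n hn)⟩
  ext_closed A B M f g h ht hA hB := by
    rw [triHatAll_iff hF] at hA hB ⊢
    obtain ⟨n, hn⟩ := hA
    obtain ⟨m, hm⟩ := hB
    exact ⟨max n m + 1, ShiftOf.cone hF ⟨f, g, h, ht⟩ (ShiftOf.le hF (le_max_left n m) hn)
      (ShiftOf.le hF ((le_max_right n m).trans (Nat.le_succ _)) hm)⟩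
  summand_closed i p hip hM := by
    rw [triHatAll_iff hF] at hM ⊢
    obtain ⟨n, hn⟩ := hM
    exact ⟨n, ShiftOf.summand hF n i p hip hn⟩

omit hF in
lemma IsThickTriSub.of_triHat {S : T → Prop} (hS : IsThickTriSub S) (hXS : ∀ N, X N → S N) :
    ∀ (n : ℕ) (M : T), TriHat X n M → S M
  | 0, M, hM => hXS M hM
  | n + 1, _, ⟨K, E, f, g, h, ht, hE, hK⟩ =>
    hS.ext_closed f g h ht (hS.of_triHat hXS n K hK) (hXS E hE)

end

/-- For a left Frobenius pair `(X, W)` in a triangulated category `T`,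
`(X, Ŵ)` is a co-t-structure on the thick subcategory `Thick(X) = X̂`: both classes are
closed under direct summands, `X[-1] ⊆ X`, `Hom(X, Ŵ[1]) = 0`, and every `C ∈ X̂` admits
approximation triangles `Y → X' → C → Y[1]` and `C → Y' → X'' → C[1]` with `X', X'' ∈ X`,
`Y, Y' ∈ Ŵ`. -/
theorem statement17 {T : Type u} [Category.{v} T] [HasZeroObject T] [HasShift T ℤ]
    [Preadditive T] [∀ n : ℤ, (shiftFunctor T n).Additive] [Pretriangulated T]
    (X W : T → Prop) (hF : TriLeftFrobenius X W) :
    (∀ {A M : T} (i : A ⟶ M) (p : M ⟶ A), i ≫ p = 𝟙 A → X M → X A) ∧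
    (∀ {A M : T} (i : A ⟶ M) (p : M ⟶ A), i ≫ p = 𝟙 A → TriHatAll W M → TriHatAll W A) ∧
    (∀ M : T, X M → X (M⟦(-1 : ℤ)⟧)) ∧
    (∀ (M N : T) (f : M ⟶ N⟦(1 : ℤ)⟧), X M → TriHatAll W N → f = 0) ∧
    (∀ M : T, TriHatAll X M →
      ∃ (Y X' : T) (f : Y ⟶ X') (g : X' ⟶ M) (h : M ⟶ Y⟦(1 : ℤ)⟧),
        (Triangle.mk f g h ∈ distTriang T) ∧ X X' ∧ TriHatAll W Y) ∧
    (∀ M : T, TriHatAll X M →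
      ∃ (Y X' : T) (f : M ⟶ Y) (g : Y ⟶ X') (h : X' ⟶ M⟦(1 : ℤ)⟧),
        (Triangle.mk f g h ∈ distTriang T) ∧ X X' ∧ TriHatAll W Y) ∧
    (∀ M, triThickClosure X M ↔ TriHatAll X M) := by
  refine ⟨hF.subX.summand_closed, ?_, fun M hM => shift_neg_mem hF hM, ?_, ?_, ?_, ?_⟩
  · rintro A M i p hip ⟨n, hn⟩
    obtain ⟨h₁, h₂⟩ := TriHat.rightOrth hF n M hn
    exact ⟨n, triHat_of_rightOrth hF n A (ShiftOf.summand hF n i p hip h₁)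
      (RightOrth.summand i p hip h₂)⟩
  · rintro M N f hM ⟨n, hn⟩
    exact (TriHat.rightOrth hF n N hn).2 M hM f
  · intro M hM
    obtain ⟨n, hn⟩ := (triHatAll_iff hF M).1 hM
    obtain ⟨Y, Q, t, hQ, hY⟩ := exists_approx_hat hF n _ (ShiftOf.succ hF n hn)
    obtain ⟨f, g, h, ht⟩ := t.rotate.iso₃ (shiftNegShift M (1 : ℤ))
    exact ⟨Y, Q, f, g, h, ht, hQ, hY⟩
  · intro M hM
    obtain ⟨n, hn⟩ := (triHatAll_iff hF M).1 hM
    obtain ⟨Y, Q, ⟨f, g, h, ht⟩, hQ, hY⟩ := exists_approx_hat hF n _ hn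
    exact ⟨Y, Q, f, g, h, ht, hQ, hY⟩
  · intro M
    constructor
    · intro hM
      exact hM _ (isThick_triHatAll hF) fun N hN => ⟨0, hN⟩
    · rintro ⟨n, hn⟩ S hS hXS
      exact hS.of_triHat hXS n M hn

end FrobeniusPaperTri
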